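/- (Mollifier approximation rate in L∞) With Λ_κ the horizontal mollifier at scale κ on 𝕋² (convolution with κ^{-2}ζ(·/κ), ζ a standard kernel), for any f with ∂̄f ∈ H^{1/2}(𝕋²) one has |f − Λ_κ f|_{L^∞(𝕋²)} ≲ √κ · |∂̄ f|_{H^{1/2}(𝕋²)}, with implicit constant independent of κ. -/

import Mathlib

open MeasureTheory
open scoped ENNReal NNReal

noncomputable section

/-- Fundamental domain of the torus `𝕋²`. -/
def Q2 : Set (Fin 2 → ℝ) := Set.univ.pi fun _ => Set.Ioo (0 : ℝ) 1

/-- The periodic (torus) distance on `𝕋²`. -/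
def pdist2 (x y : Fin 2 → ℝ) : ℝ := ⨅ k : Fin 2 → ℤ, ‖x - y + fun i => (k i : ℝ)‖

/-- Periodicity on `𝕋²`. -/
def Per2 {E : Type*} (f : (Fin 2 → ℝ) → E) : Prop :=
  ∀ (x : Fin 2 → ℝ) (k : Fin 2 → ℤ), f (x + fun i => (k i : ℝ)) = f x

/-- The horizontal mollification at scale `κ`:
`Λ_κ f (x) = ∫ κ⁻² ζ((x − z)/κ) f(z) dz`. -/
def moll (ζ : (Fin 2 → ℝ) → ℝ) (κ : ℝ) (f : (Fin 2 → ℝ) → ℝ) (x : Fin 2 → ℝ) : ℝ :=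
  ∫ z, (κ ^ 2)⁻¹ * ζ (κ⁻¹ • (x - z)) * f z

/-- The `H^{1/2}(𝕋²)` (Sobolev–Slobodeckij) norm. -/
def H12 (φ : (Fin 2 → ℝ) → ℝ) : ℝ≥0∞ :=
  ((∫⁻ x in Q2, (‖φ x‖₊ : ℝ≥0∞) ^ 2) +
      ∫⁻ x in Q2, ∫⁻ y in Q2,
        ((‖φ x - φ y‖₊ : ℝ≥0∞) ^ 2) / ENNReal.ofReal (pdist2 x y ^ (3 : ℝ))) ^ (1/2 : ℝ)

/-!
Membership of `∂f` in `H^{1/2}(𝕋²)` does not bound `∂f`, but it prevents the means of `|∂f|` over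
balls of radius `r` from growing faster than `r^{-1/2}`: by Jensen's inequality the means over
concentric balls of radii `r` and `4r` differ by at most the square root of the Gagliardo double
integral over these balls times `O(r^{-1})`, and a geometric sum over the scales `4^n r` results.
Integrating `|∂f|` along the segments issuing from `x`, as in Morrey's inequality, turns this growth
rate into `⨍_{B(x,κ)} |f(x) - f(z)| dz ≲ κ^{1/2} |∂f|_{H^{1/2}}` for `κ ≤ 1/2`. Periodicity then
bounds the oscillation of `f` on the whole torus, which covers `κ ≥ 1/2`. Finally the mollification
kernel is at most a multiple of the normalized indicator of `B(x,κ)`, so `|f(x) - Λ_κ f(x)|` is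
controlled by this mean.
-/

open Metric Module Set

section Average

variable {α β : Type*} [MeasurableSpace α] [MeasurableSpace β] {μ ν : Measure α}

theorem laverage_mono {φ ψ : α → ℝ≥0∞} (h : φ ≤ ψ) : ⨍⁻ y, φ y ∂μ ≤ ⨍⁻ y, ψ y ∂μ :=
  laverage_mono_ae (.of_forall h)

theorem sq_laverage_le_laverage_sq [IsFiniteMeasure μ] {φ : α → ℝ≥0∞} (hφ : AEMeasurable φ μ) :
    (⨍⁻ y, φ y ∂μ) ^ 2 ≤ ⨍⁻ y, φ y ^ 2 ∂μ := by
  rcases eq_zero_or_neZero μ with rfl | _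
  · simp
  have holder := ENNReal.lintegral_mul_le_Lp_mul_Lq ((μ univ)⁻¹ • μ) Real.HolderConjugate.two_two
    (hφ.smul_measure _) (aemeasurable_const (b := (1 : ℝ≥0∞)))
  simp only [Pi.mul_apply, mul_one, ENNReal.rpow_two, one_pow, lintegral_one, measure_univ,
    ENNReal.one_rpow] at holder
  calc (⨍⁻ y, φ y ∂μ) ^ 2 ≤ ((⨍⁻ y, φ y ^ 2 ∂μ) ^ (1 / 2 : ℝ)) ^ 2 := by gcongr; exact holder
    _ = ⨍⁻ y, φ y ^ 2 ∂μ := by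
      rw [← ENNReal.rpow_two, ← ENNReal.rpow_mul]; norm_num

theorem laverage_map {T : α → β} (hT : Measurable T) {φ : β → ℝ≥0∞} (hφ : Measurable φ) :
    ⨍⁻ y, φ y ∂(μ.map T) = ⨍⁻ z, φ (T z) ∂μ := by
  rw [laverage_eq, laverage_eq, lintegral_map hφ hT, Measure.map_apply hT .univ, preimage_univ]

theorem laverage_smul_measure {c : ℝ≥0∞} (hc₀ : c ≠ 0) (hc : c ≠ ∞) (φ : α → ℝ≥0∞) :
    ⨍⁻ y, φ y ∂(c • μ) = ⨍⁻ y, φ y ∂μ := by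
  rw [laverage_eq, laverage_eq, lintegral_smul_measure, Measure.smul_apply, smul_eq_mul,
    smul_eq_mul, ENNReal.mul_div_mul_left _ _ hc₀ hc]

variable {F : Type*} [NormedAddCommGroup F] [MeasurableSpace F] [BorelSpace F]
  [IsFiniteMeasure μ] [NeZero μ] [IsFiniteMeasure ν] [NeZero ν]

theorem laverage_enorm_le_add_laverage_laverage_enorm_sub {g : α → F} (hg : Measurable g) :
    ⨍⁻ y, ‖g y‖ₑ ∂μ ≤ (⨍⁻ z, ‖g z‖ₑ ∂ν) + ⨍⁻ y, ⨍⁻ z, ‖g y - g z‖ₑ ∂ν ∂μ := by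
  have pointwise (y : α) : ‖g y‖ₑ ≤ (⨍⁻ z, ‖g z‖ₑ ∂ν) + ⨍⁻ z, ‖g y - g z‖ₑ ∂ν :=
    calc ‖g y‖ₑ = ⨍⁻ _, ‖g y‖ₑ ∂ν := (laverage_const ν _).symm
      _ ≤ ⨍⁻ z, (‖g z‖ₑ + ‖g y - g z‖ₑ) ∂ν :=
        laverage_mono fun z ↦ by simpa using enorm_add_le (g z) (g y - g z)
      _ = _ := lintegral_add_left hg.enorm _
  calc ⨍⁻ y, ‖g y‖ₑ ∂μ
      ≤ ⨍⁻ y, ((⨍⁻ z, ‖g z‖ₑ ∂ν) + ⨍⁻ z, ‖g y - g z‖ₑ ∂ν) ∂μ := laverage_mono pointwise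
    _ = (⨍⁻ _, ⨍⁻ z, ‖g z‖ₑ ∂ν ∂μ) + ⨍⁻ y, ⨍⁻ z, ‖g y - g z‖ₑ ∂ν ∂μ :=
      lintegral_add_left measurable_const _
    _ = _ := by rw [laverage_const]

theorem sq_laverage_enorm_le [SecondCountableTopology F] {g : α → F} (hg : Measurable g) :
    (⨍⁻ y, ‖g y‖ₑ ∂μ) ^ 2 ≤
      2 * ((⨍⁻ z, ‖g z‖ₑ ∂ν) ^ 2 + ⨍⁻ y, ⨍⁻ z, ‖g y - g z‖ₑ ^ 2 ∂ν ∂μ) := by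
  have hdiff : Measurable fun p : α × α ↦ ‖g p.1 - g p.2‖ₑ := by fun_prop
  have jensen : (⨍⁻ y, ⨍⁻ z, ‖g y - g z‖ₑ ∂ν ∂μ) ^ 2 ≤ ⨍⁻ y, ⨍⁻ z, ‖g y - g z‖ₑ ^ 2 ∂ν ∂μ :=
    (sq_laverage_le_laverage_sq hdiff.lintegral_prod_right'.aemeasurable).trans <|
      laverage_mono fun y ↦ sq_laverage_le_laverage_sq (by fun_prop)
  calc (⨍⁻ y, ‖g y‖ₑ ∂μ) ^ 2
      ≤ ((⨍⁻ z, ‖g z‖ₑ ∂ν) + ⨍⁻ y, ⨍⁻ z, ‖g y - g z‖ₑ ∂ν ∂μ) ^ 2 := by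
        gcongr; exact laverage_enorm_le_add_laverage_laverage_enorm_sub hg
    _ ≤ 2 * ((⨍⁻ z, ‖g z‖ₑ ∂ν) ^ 2 + (⨍⁻ y, ⨍⁻ z, ‖g y - g z‖ₑ ∂ν ∂μ) ^ 2) := by
        simpa [show (2 : ℝ) - 1 = 1 by norm_num] using
          ENNReal.rpow_add_le_mul_rpow_add_rpow _ _ one_le_two
    _ ≤ _ := by gcongr

end Average

section Ball

theorem isFiniteMeasure_restrict_closedBall {X : Type*} [PseudoMetricSpace X] [ProperSpace X]
    [MeasurableSpace X] (μ : Measure X) [IsFiniteMeasureOnCompacts μ] (x : X) (r : ℝ) :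
    IsFiniteMeasure (μ.restrict (closedBall x r)) :=
  ⟨by simpa using (isCompact_closedBall x r).measure_lt_top⟩

theorem neZero_restrict_closedBall {X : Type*} [PseudoMetricSpace X] [MeasurableSpace X]
    (μ : Measure X) [μ.IsOpenPosMeasure] (x : X) {r : ℝ} (hr : 0 < r) :
    NeZero (μ.restrict (closedBall x r)) :=
  ⟨by simpa using (measure_closedBall_pos μ x hr).ne'⟩

variable {E : Type*} [NormedAddCommGroup E] [NormedSpace ℝ E] [FiniteDimensional ℝ E]
  [MeasurableSpace E] [BorelSpace E] (μ : Measure E) [μ.IsAddHaarMeasure]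

theorem map_lineMap_addHaar (x : E) {s : ℝ} (hs : s ≠ 0) :
    μ.map (fun z ↦ AffineMap.lineMap x z s) = ENNReal.ofReal |(s ^ finrank ℝ E)⁻¹| • μ := by
  have factor : (fun z ↦ AffineMap.lineMap x z s) = (· + x) ∘ (s • ·) ∘ (· - x) := by
    ext z; simp [AffineMap.lineMap_apply]
  rw [factor, ← Measure.map_map (by fun_prop) (by fun_prop),
    ← Measure.map_map (by fun_prop) (by fun_prop), map_sub_right_eq_self,
    Measure.map_addHaar_smul μ hs, Measure.map_smul, map_add_right_eq_self]

theorem setLAverage_closedBall_lineMap (x : E) (κ : ℝ) {s : ℝ} (hs : 0 < s) {φ : E → ℝ≥0∞}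
    (hφ : Measurable φ) :
    ⨍⁻ z in closedBall x κ, φ (AffineMap.lineMap x z s) ∂μ =
      ⨍⁻ y in closedBall x (s * κ), φ y ∂μ := by
  have hT : Measurable fun z : E ↦ AffineMap.lineMap x z s := by
    simp only [AffineMap.lineMap_apply]; fun_prop
  have preimage : (fun z ↦ AffineMap.lineMap x z s) ⁻¹' closedBall x (s * κ) = closedBall x κ := by
    ext z
    simp [abs_of_pos hs, hs, dist_comm]
  rw [← laverage_map hT hφ, ← preimage, ← Measure.restrict_map hT measurableSet_closedBall,
    map_lineMap_addHaar μ x hs.ne', Measure.restrict_smul,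
    laverage_smul_measure (by simp [hs.ne']) ENNReal.ofReal_ne_top]

theorem setLAverage_pi_closedBall {ι : Type*} [Fintype ι] (x : ι → ℝ) {r : ℝ} (hr : 0 < r)
    (φ : (ι → ℝ) → ℝ≥0∞) :
    ⨍⁻ y in closedBall x r, φ y ∂volume =
      ENNReal.ofReal ((2 * r) ^ Fintype.card ι)⁻¹ * ∫⁻ y in closedBall x r, φ y := by
  rw [setLAverage_eq, Real.volume_pi_closedBall x hr.le, ENNReal.div_eq_inv_mul,
    ENNReal.ofReal_inv_of_pos (by positivity)]

end Ball

section Morrey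

variable {E F : Type*} [NormedAddCommGroup E] [NormedSpace ℝ E] [NormedAddCommGroup F]
  [NormedSpace ℝ F] {f : E → F}

theorem enorm_sub_le_lintegral_enorm_fderiv (hf : ContDiff ℝ 1 f) (x z : E) :
    ‖f x - f z‖ₑ ≤ ‖z - x‖ₑ * ∫⁻ s in Ioc (0 : ℝ) 1, ‖fderiv ℝ f (AffineMap.lineMap x z s)‖ₑ := by
  have hline : ContDiff ℝ 1 (AffineMap.lineMap x z : ℝ → E) :=
    AffineMap.contDiff_lineMap x z
  have hderiv (s : ℝ) : deriv (f ∘ AffineMap.lineMap x z) s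
      = fderiv ℝ f (AffineMap.lineMap x z s) (z - x) :=
    ((hf.differentiable one_ne_zero _).hasFDerivAt.comp_hasDerivAt s
      AffineMap.hasDerivAt_lineMap).deriv
  have ftc := enorm_sub_le_lintegral_deriv_of_contDiffOn_Icc
    (hf.comp hline).contDiffOn (zero_le_one (α := ℝ))
  simp only [Function.comp_apply, AffineMap.lineMap_apply_zero, AffineMap.lineMap_apply_one,
    hderiv] at ftc
  rw [setLIntegral_congr Ioc_ae_eq_Icc, enorm_sub_rev, ← lintegral_const_mul' _ _ enorm_ne_top]
  refine ftc.trans (lintegral_mono fun s ↦ ?_)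
  rw [mul_comm]
  exact ContinuousLinearMap.le_opENorm _ _

theorem lintegral_Ioc_rpow_sub_one {a : ℝ} (ha : 0 < a) :
    ∫⁻ s in Ioc (0 : ℝ) 1, ENNReal.ofReal (s ^ (a - 1)) = ENNReal.ofReal a⁻¹ := by
  have hint : IntegrableOn (fun s : ℝ ↦ s ^ (a - 1)) (Ioc 0 1) :=
    (intervalIntegrable_iff_integrableOn_Ioc_of_le zero_le_one).1
      (intervalIntegral.intervalIntegrable_rpow' (by linarith))
  have hnonneg : ∀ᵐ s ∂volume.restrict (Ioc (0 : ℝ) 1), 0 ≤ s ^ (a - 1) :=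
    (ae_restrict_mem measurableSet_Ioc).mono fun s hs ↦ Real.rpow_nonneg hs.1.le _
  rw [← ofReal_integral_eq_lintegral_ofReal hint hnonneg,
    ← intervalIntegral.integral_of_le zero_le_one, integral_rpow (.inl (by linarith))]
  simp [ha.ne']

variable [FiniteDimensional ℝ E] [MeasurableSpace E] [BorelSpace E] (μ : Measure E)
  [μ.IsAddHaarMeasure]

theorem setLAverage_closedBall_enorm_sub_le (hf : ContDiff ℝ 1 f) (x : E) (κ : ℝ) :
    ⨍⁻ z in closedBall x κ, ‖f x - f z‖ₑ ∂μ ≤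
      ENNReal.ofReal κ *
        ∫⁻ s in Ioc (0 : ℝ) 1, ⨍⁻ y in closedBall x (s * κ), ‖fderiv ℝ f y‖ₑ ∂μ := by
  have hDf : Continuous (fderiv ℝ f) := hf.continuous_fderiv one_ne_zero
  have hmeas : Measurable fun p : E × ℝ ↦ ‖fderiv ℝ f (AffineMap.lineMap x p.1 p.2)‖ₑ := by
    simp only [AffineMap.lineMap_apply]
    exact Continuous.measurable (by fun_prop)
  have := isFiniteMeasure_restrict_closedBall μ x κ
  calc ⨍⁻ z in closedBall x κ, ‖f x - f z‖ₑ ∂μ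
      ≤ ⨍⁻ z in closedBall x κ, (ENNReal.ofReal κ *
          ∫⁻ s in Ioc (0 : ℝ) 1, ‖fderiv ℝ f (AffineMap.lineMap x z s)‖ₑ) ∂μ := by
        simp only [setLAverage_eq]
        gcongr ?_ / _
        refine setLIntegral_mono' measurableSet_closedBall fun z hz ↦
          (enorm_sub_le_lintegral_enorm_fderiv hf x z).trans ?_
        gcongr
        rw [← ofReal_norm, ← dist_eq_norm]
        exact ENNReal.ofReal_le_ofReal hz
    _ = ENNReal.ofReal κ * ∫⁻ s in Ioc (0 : ℝ) 1,
          ⨍⁻ z in closedBall x κ, ‖fderiv ℝ f (AffineMap.lineMap x z s)‖ₑ ∂μ := by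
        simp only [laverage]
        rw [lintegral_const_mul' _ _ ENNReal.ofReal_ne_top,
          lintegral_lintegral_swap hmeas.aemeasurable]
    _ = _ := by
        congr 1
        exact setLIntegral_congr_fun measurableSet_Ioc fun s hs ↦
          setLAverage_closedBall_lineMap μ x κ hs.1 hDf.enorm.measurable

theorem setLAverage_closedBall_enorm_sub_le_rpow (hf : ContDiff ℝ 1 f) {x : E} {κ a : ℝ}
    (hκ : 0 < κ) (ha : 0 < a) {A : ℝ≥0∞}
    (hgrowth : ∀ r ∈ Ioc 0 κ,
      ⨍⁻ y in closedBall x r, ‖fderiv ℝ f y‖ₑ ∂μ ≤ ENNReal.ofReal (r ^ (a - 1)) * A) :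
    ⨍⁻ z in closedBall x κ, ‖f x - f z‖ₑ ∂μ ≤ ENNReal.ofReal (κ ^ a / a) * A := by
  have hscaled : ∀ s ∈ Ioc (0 : ℝ) 1, ⨍⁻ y in closedBall x (s * κ), ‖fderiv ℝ f y‖ₑ ∂μ ≤
      ENNReal.ofReal (s ^ (a - 1)) * (ENNReal.ofReal (κ ^ (a - 1)) * A) := fun s hs ↦ by
    rw [← mul_assoc, ← ENNReal.ofReal_mul (Real.rpow_nonneg hs.1.le _),
      ← Real.mul_rpow hs.1.le hκ.le]
    exact hgrowth _ ⟨mul_pos hs.1 hκ, mul_le_of_le_one_left hκ.le hs.2⟩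
  calc ⨍⁻ z in closedBall x κ, ‖f x - f z‖ₑ ∂μ
      ≤ ENNReal.ofReal κ *
          ∫⁻ s in Ioc (0 : ℝ) 1, ⨍⁻ y in closedBall x (s * κ), ‖fderiv ℝ f y‖ₑ ∂μ :=
        setLAverage_closedBall_enorm_sub_le μ hf x κ
    _ ≤ ENNReal.ofReal κ * ∫⁻ s in Ioc (0 : ℝ) 1,
          ENNReal.ofReal (s ^ (a - 1)) * (ENNReal.ofReal (κ ^ (a - 1)) * A) := by
        gcongr ENNReal.ofReal κ * ?_
        exact setLIntegral_mono' measurableSet_Ioc hscaled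
    _ = ENNReal.ofReal κ * (ENNReal.ofReal a⁻¹ * (ENNReal.ofReal (κ ^ (a - 1)) * A)) := by
        rw [lintegral_mul_const _ (by fun_prop), lintegral_Ioc_rpow_sub_one ha]
    _ = ENNReal.ofReal (κ ^ a / a) * A := by
        rw [← mul_assoc, ← mul_assoc, ← ENNReal.ofReal_mul hκ.le,
          ← ENNReal.ofReal_mul (by positivity), Real.rpow_sub_one hκ.ne']
        congr 2
        field_simp

end Morrey

theorem opENorm_le_sum_enorm_single {ι F : Type*} [Fintype ι] [DecidableEq ι]
    [NormedAddCommGroup F] [NormedSpace ℝ F] (L : (ι → ℝ) →L[ℝ] F) :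
    ‖L‖ₑ ≤ ∑ i, ‖L (Pi.single i 1)‖ₑ := by
  have hnorm : ‖L‖ ≤ ∑ i, ‖L (Pi.single i 1)‖ :=
    L.opNorm_le_bound (by positivity) fun v ↦
      calc ‖L v‖ = ‖∑ i, v i • L (Pi.single i 1)‖ := by
            conv_lhs => rw [pi_eq_sum_univ' v, map_sum]
            simp only [map_smul]
        _ ≤ ∑ i, ‖L (Pi.single i 1)‖ * ‖v‖ := by
            refine norm_sum_le_of_le _ fun i _ ↦ ?_
            rw [norm_smul, mul_comm]
            gcongr
            exact norm_le_pi_norm v i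
        _ = (∑ i, ‖L (Pi.single i 1)‖) * ‖v‖ := (Finset.sum_mul ..).symm
  simpa only [ofReal_norm, ENNReal.ofReal_sum_of_nonneg fun i _ ↦ norm_nonneg (L (Pi.single i 1))]
    using ENNReal.ofReal_le_ofReal hnorm

theorem forall_mem_Ioc_of_dilation {P : ℝ → Prop} {θ R : ℝ} (hθ : 1 < θ)
    (base : ∀ r ∈ Ioc (R / θ) R, P r) (step : ∀ r ∈ Ioc 0 (R / θ), P (θ * r) → P r) :
    ∀ r ∈ Ioc 0 R, P r := by
  rintro r ⟨hr, hrR⟩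
  obtain ⟨n, hn⟩ : ∃ n : ℕ, R / r < θ ^ n := pow_unbounded_of_one_lt _ hθ
  rw [div_lt_iff₀ hr] at hn
  induction n generalizing r with
  | zero => linarith
  | succ n ih =>
    rcases lt_or_ge (R / θ) r with hbase | hstep
    · exact base r ⟨hbase, hrR⟩
    · refine step r ⟨hr, hstep⟩ (ih (θ * r) (by positivity) ?_ ?_)
      · rwa [le_div_iff₀' (by positivity)] at hstep
      · rwa [← mul_assoc, ← pow_succ]

section Torus

theorem pdist2_le_norm_sub (y z : Fin 2 → ℝ) : pdist2 y z ≤ ‖y - z‖ := by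
  have hbdd : BddBelow (range fun k : Fin 2 → ℤ ↦ ‖y - z + fun i ↦ (k i : ℝ)‖) :=
    ⟨0, forall_mem_range.2 fun _ ↦ norm_nonneg _⟩
  have hzero : (fun i ↦ ((0 : Fin 2 → ℤ) i : ℝ)) = 0 := by ext; simp
  exact (ciInf_le hbdd 0).trans_eq (by rw [hzero, add_zero])

theorem per2_pdist2_right (y : Fin 2 → ℝ) : Per2 (pdist2 y) := fun z k ↦
  (Equiv.addLeft (-k)).iInf_congr fun j ↦ by
    congr 1
    ext i
    simp only [Equiv.coe_addLeft, Pi.add_apply, Pi.neg_apply, Int.cast_add, Int.cast_neg,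
      Pi.sub_apply]
    ring

theorem per2_pdist2_left (z : Fin 2 → ℝ) : Per2 fun y ↦ pdist2 y z := fun y k ↦
  (Equiv.addLeft k).iInf_congr fun j ↦ by
    congr 1
    ext i
    simp only [Equiv.coe_addLeft, Pi.add_apply, Int.cast_add, Pi.sub_apply]
    ring

theorem Per2.fderiv_apply {f : (Fin 2 → ℝ) → ℝ} (hf : Per2 f) (v : Fin 2 → ℝ) :
    Per2 fun y ↦ fderiv ℝ f y v := fun x k ↦ by
  have hshift : (fun y ↦ f (y + fun i ↦ (k i : ℝ))) = f := funext fun y ↦ hf y k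
  have hcomp := fderiv_comp_add_right (𝕜 := ℝ) (f := f) (x := x) fun i ↦ (k i : ℝ)
  rw [hshift] at hcomp
  simp only [hcomp]

theorem Per2.map_add_of_mem_span {E : Type*} {Φ : (Fin 2 → ℝ) → E} (hΦ : Per2 Φ)
    {g : Fin 2 → ℝ} (hg : g ∈ Submodule.span ℤ (range (Pi.basisFun ℝ (Fin 2)))) (y : Fin 2 → ℝ) :
    Φ (g + y) = Φ y := by
  rw [(Pi.basisFun ℝ (Fin 2)).mem_span_iff_repr_mem ℤ] at hg
  choose k hk using hg
  have hgk : g = fun i ↦ (k i : ℝ) := funext fun i ↦ by simpa using (hk i).symm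
  rw [hgk, add_comm, hΦ y k]

theorem Q2_ae_eq_fundamentalDomain :
    Q2 =ᵐ[volume] ZSpan.fundamentalDomain (Pi.basisFun ℝ (Fin 2)) := by
  rw [ZSpan.fundamentalDomain_pi_basisFun]
  exact Measure.univ_pi_Ioo_ae_eq_Icc.trans Measure.univ_pi_Ico_ae_eq_Icc.symm

open scoped Pointwise in
theorem closedBall_half_ae_eq_vadd_fundamentalDomain (x : Fin 2 → ℝ) :
    closedBall x (1 / 2) =ᵐ[volume]
      (x - fun _ ↦ 1 / 2) +ᵥ ZSpan.fundamentalDomain (Pi.basisFun ℝ (Fin 2)) := by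
  have hbox : (x - fun _ ↦ 1 / 2) +ᵥ ZSpan.fundamentalDomain (Pi.basisFun ℝ (Fin 2))
      = univ.pi fun i ↦ Ico (x i - 1 / 2) (x i + 1 / 2) := by
    ext y
    simp only [mem_vadd_set_iff_neg_vadd_mem, ZSpan.fundamentalDomain_pi_basisFun, mem_pi, mem_univ,
      true_implies, mem_Ico, vadd_eq_add, Pi.add_apply, Pi.neg_apply, Pi.sub_apply]
    refine forall_congr' fun i ↦ and_congr ?_ ?_ <;> constructor <;> intro h <;> linarith
  rw [hbox, closedBall_pi _ (by norm_num)]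
  simp only [Real.closedBall_eq_Icc]
  rw [pi_univ_Icc]
  exact Measure.univ_pi_Ico_ae_eq_Icc.symm

theorem Per2.setLIntegral_closedBall_half {Φ : (Fin 2 → ℝ) → ℝ≥0∞} (hΦ : Per2 Φ)
    (x : Fin 2 → ℝ) : ∫⁻ y in closedBall x (1 / 2), Φ y = ∫⁻ y in Q2, Φ y := by
  let b := Pi.basisFun ℝ (Fin 2)
  have hdomain := ZSpan.isAddFundamentalDomain' b (volume : Measure (Fin 2 → ℝ))
  have : Countable (Submodule.span ℤ (range b)).toAddSubgroup :=
    inferInstanceAs (Countable (Submodule.span ℤ (range b)))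
  rw [setLIntegral_congr (closedBall_half_ae_eq_vadd_fundamentalDomain x),
    setLIntegral_congr Q2_ae_eq_fundamentalDomain]
  exact (hdomain.vadd_of_comm _).setLIntegral_eq hdomain Φ fun g y ↦ hΦ.map_add_of_mem_span g.2 y

theorem Per2.setLAverage_closedBall_half_eq {Φ : (Fin 2 → ℝ) → ℝ≥0∞} (hΦ : Per2 Φ)
    (x y : Fin 2 → ℝ) :
    ⨍⁻ z in closedBall x (1 / 2), Φ z ∂volume = ⨍⁻ z in closedBall y (1 / 2), Φ z ∂volume := by
  rw [setLAverage_pi_closedBall x one_half_pos, setLAverage_pi_closedBall y one_half_pos,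
    hΦ.setLIntegral_closedBall_half, hΦ.setLIntegral_closedBall_half]

end Torus

section Gagliardo

variable {φ : (Fin 2 → ℝ) → ℝ}

/-- The integrand of the Gagliardo seminorm of `H^{1/2}(𝕋²)`; the exponent is
`3 = 2 + 2 · (1/2)`, dimension plus twice the smoothness. -/
def gagliardoQuotient (φ : (Fin 2 → ℝ) → ℝ) (x y : Fin 2 → ℝ) : ℝ≥0∞ :=
  ‖φ x - φ y‖ₑ ^ 2 / ENNReal.ofReal (pdist2 x y ^ (3 : ℝ))

theorem H12_sq (φ : (Fin 2 → ℝ) → ℝ) :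
    H12 φ ^ 2 = (∫⁻ x in Q2, ‖φ x‖ₑ ^ 2) + ∫⁻ x in Q2, ∫⁻ y in Q2, gagliardoQuotient φ x y := by
  rw [H12, ← ENNReal.rpow_two, ← ENNReal.rpow_mul, one_div_mul_cancel two_ne_zero,
    ENNReal.rpow_one]
  rfl

theorem enorm_sub_sq_le_gagliardoQuotient (φ : (Fin 2 → ℝ) → ℝ) {y z : Fin 2 → ℝ} {R : ℝ}
    (hR : 0 < R) (hyz : ‖y - z‖ ≤ R) :
    ‖φ y - φ z‖ₑ ^ 2 ≤ ENNReal.ofReal (R ^ 3) * gagliardoQuotient φ y z := by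
  have hpos : ENNReal.ofReal (R ^ 3) ≠ 0 := by simpa using pow_pos hR 3
  have hdist : ENNReal.ofReal (pdist2 y z ^ (3 : ℝ)) ≤ ENNReal.ofReal (R ^ 3) := by
    rw [← Real.rpow_natCast R 3]
    refine ENNReal.ofReal_le_ofReal (Real.rpow_le_rpow ?_ ?_ (by norm_num))
    · exact Real.iInf_nonneg fun _ ↦ norm_nonneg _
    · exact (pdist2_le_norm_sub y z).trans hyz
  calc ‖φ y - φ z‖ₑ ^ 2
      = ENNReal.ofReal (R ^ 3) * (‖φ y - φ z‖ₑ ^ 2 / ENNReal.ofReal (R ^ 3)) :=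
        (ENNReal.mul_div_cancel hpos ENNReal.ofReal_ne_top).symm
    _ ≤ _ := by gcongr; exact ENNReal.div_le_div_left hdist _

theorem Per2.setLIntegral_enorm_sq_le_H12_sq (hφ : Per2 φ) (x : Fin 2 → ℝ) :
    ∫⁻ y in closedBall x (1 / 2), ‖φ y‖ₑ ^ 2 ≤ H12 φ ^ 2 := by
  rw [Per2.setLIntegral_closedBall_half (fun y k ↦ by simp only [hφ y k]), H12_sq]
  exact le_self_add

theorem Per2.setLIntegral_gagliardoQuotient_le_H12_sq (hφ : Per2 φ) (x : Fin 2 → ℝ) :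
    ∫⁻ y in closedBall x (1 / 2), ∫⁻ z in closedBall x (1 / 2), gagliardoQuotient φ y z ≤
      H12 φ ^ 2 := by
  have hright (y : Fin 2 → ℝ) : Per2 (gagliardoQuotient φ y) := fun z k ↦ by
    simp only [gagliardoQuotient, hφ z k, per2_pdist2_right y z k]
  have hleft : Per2 fun y ↦ ∫⁻ z in Q2, gagliardoQuotient φ y z := fun y k ↦ by
    simp only [gagliardoQuotient, hφ y k, per2_pdist2_left _ y k]
  simp only [(hright _).setLIntegral_closedBall_half, hleft.setLIntegral_closedBall_half, H12_sq]
  exact le_add_self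

theorem Per2.setLAverage_enorm_sq_le (hφ : Per2 φ) (x : Fin 2 → ℝ) {r : ℝ}
    (hr : r ∈ Ioc 0 (1 / 2)) :
    ⨍⁻ y in closedBall x r, ‖φ y‖ₑ ^ 2 ∂volume ≤
      ENNReal.ofReal ((2 * r) ^ 2)⁻¹ * H12 φ ^ 2 := by
  rw [setLAverage_pi_closedBall x hr.1, Fintype.card_fin]
  gcongr
  exact (lintegral_mono_set (closedBall_subset_closedBall hr.2)).trans
    (hφ.setLIntegral_enorm_sq_le_H12_sq x)

theorem Per2.setLAverage_enorm_sub_sq_le (hφ : Per2 φ) (x : Fin 2 → ℝ) {r ρ : ℝ}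
    (hr : r ∈ Ioc 0 (1 / 2)) (hρ : ρ ∈ Ioc 0 (1 / 2)) :
    ⨍⁻ y in closedBall x r, ⨍⁻ z in closedBall x ρ, ‖φ y - φ z‖ₑ ^ 2 ∂volume ∂volume ≤
      ENNReal.ofReal ((r + ρ) ^ 3 / ((2 * r) ^ 2 * (2 * ρ) ^ 2)) * H12 φ ^ 2 := by
  have hpair : ∫⁻ y in closedBall x r, ∫⁻ z in closedBall x ρ, ‖φ y - φ z‖ₑ ^ 2 ≤
      ENNReal.ofReal ((r + ρ) ^ 3) * H12 φ ^ 2 :=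
    calc ∫⁻ y in closedBall x r, ∫⁻ z in closedBall x ρ, ‖φ y - φ z‖ₑ ^ 2
        ≤ ∫⁻ y in closedBall x r, ∫⁻ z in closedBall x ρ,
            ENNReal.ofReal ((r + ρ) ^ 3) * gagliardoQuotient φ y z := by
          refine setLIntegral_mono' measurableSet_closedBall fun y hy ↦
            setLIntegral_mono' measurableSet_closedBall fun z hz ↦
              enorm_sub_sq_le_gagliardoQuotient φ (add_pos hr.1 hρ.1) ?_
          rw [← dist_eq_norm]
          exact (dist_triangle_right y z x).trans (add_le_add hy hz)
      _ = ENNReal.ofReal ((r + ρ) ^ 3) *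
            ∫⁻ y in closedBall x r, ∫⁻ z in closedBall x ρ, gagliardoQuotient φ y z := by
          simp only [lintegral_const_mul' _ _ ENNReal.ofReal_ne_top]
      _ ≤ _ := by
          gcongr
          refine le_trans ?_ (hφ.setLIntegral_gagliardoQuotient_le_H12_sq x)
          gcongr
          exacts [hr.2, hρ.2]
  calc ⨍⁻ y in closedBall x r, ⨍⁻ z in closedBall x ρ, ‖φ y - φ z‖ₑ ^ 2 ∂volume ∂volume
      = ENNReal.ofReal ((2 * r) ^ 2)⁻¹ * (ENNReal.ofReal ((2 * ρ) ^ 2)⁻¹ *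
          ∫⁻ y in closedBall x r, ∫⁻ z in closedBall x ρ, ‖φ y - φ z‖ₑ ^ 2) := by
        simp only [setLAverage_pi_closedBall x hρ.1, setLAverage_pi_closedBall x hr.1,
          lintegral_const_mul' _ _ ENNReal.ofReal_ne_top, Fintype.card_fin]
    _ ≤ ENNReal.ofReal ((2 * r) ^ 2)⁻¹ * (ENNReal.ofReal ((2 * ρ) ^ 2)⁻¹ *
          (ENNReal.ofReal ((r + ρ) ^ 3) * H12 φ ^ 2)) := by gcongr
    _ = _ := by
        rw [← mul_assoc, ← mul_assoc, ← ENNReal.ofReal_mul (by positivity),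
          ← ENNReal.ofReal_mul (by positivity), ← mul_inv, inv_mul_eq_div]

end Gagliardo

section HolderMean

theorem Per2.sq_setLAverage_enorm_le {φ : (Fin 2 → ℝ) → ℝ} (hφ : Per2 φ) (hmeas : Measurable φ)
    (x : Fin 2 → ℝ) : ∀ r ∈ Ioc (0 : ℝ) (1 / 2),
      (⨍⁻ y in closedBall x r, ‖φ y‖ₑ ∂volume) ^ 2 ≤ ENNReal.ofReal (2 / r) * H12 φ ^ 2 := by
  have hfinite (r : ℝ) := isFiniteMeasure_restrict_closedBall volume x r
  refine forall_mem_Ioc_of_dilation (θ := 4) (by norm_num) (fun r hr ↦ ?_) fun r hr ih ↦ ?_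
  · have hr₀ : 0 < r := lt_trans (by norm_num) hr.1
    calc (⨍⁻ y in closedBall x r, ‖φ y‖ₑ ∂volume) ^ 2
        ≤ ⨍⁻ y in closedBall x r, ‖φ y‖ₑ ^ 2 ∂volume := sq_laverage_le_laverage_sq (by fun_prop)
      _ ≤ ENNReal.ofReal ((2 * r) ^ 2)⁻¹ * H12 φ ^ 2 :=
        hφ.setLAverage_enorm_sq_le x ⟨hr₀, hr.2⟩
      _ ≤ ENNReal.ofReal (2 / r) * H12 φ ^ 2 := by
        gcongr
        rw [inv_le_iff_one_le_mul₀ (by positivity)]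
        field_simp
        linarith [hr.1]
  · have hr₀ : 0 < r := hr.1
    have hr4 : r ≤ 1 / 8 := hr.2.trans (by norm_num)
    have := neZero_restrict_closedBall volume x hr₀
    have := neZero_restrict_closedBall volume x (mul_pos four_pos hr₀)
    calc (⨍⁻ y in closedBall x r, ‖φ y‖ₑ ∂volume) ^ 2
        ≤ 2 * ((⨍⁻ z in closedBall x (4 * r), ‖φ z‖ₑ ∂volume) ^ 2 +
            ⨍⁻ y in closedBall x r, ⨍⁻ z in closedBall x (4 * r),
              ‖φ y - φ z‖ₑ ^ 2 ∂volume ∂volume) := sq_laverage_enorm_le hmeas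
      _ ≤ 2 * (ENNReal.ofReal (2 / (4 * r)) * H12 φ ^ 2 + ENNReal.ofReal
            ((r + 4 * r) ^ 3 / ((2 * r) ^ 2 * (2 * (4 * r)) ^ 2)) * H12 φ ^ 2) := by
        gcongr
        exact hφ.setLAverage_enorm_sub_sq_le x ⟨hr₀, by linarith⟩ ⟨by linarith, by linarith⟩
      _ = ENNReal.ofReal (2 * (2 / (4 * r) + (r + 4 * r) ^ 3 / ((2 * r) ^ 2 * (2 * (4 * r)) ^ 2)))
            * H12 φ ^ 2 := by
        rw [← add_mul, ← ENNReal.ofReal_add (by positivity) (by positivity), ← mul_assoc,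
          ENNReal.ofReal_mul zero_le_two, ENNReal.ofReal_ofNat]
      _ ≤ ENNReal.ofReal (2 / r) * H12 φ ^ 2 := by
        -- The two terms are `1 / r` and `(125 / 128) / r`, so the constant `2` reproduces itself.
        gcongr
        field_simp
        norm_num

theorem Per2.setLAverage_enorm_le {φ : (Fin 2 → ℝ) → ℝ} (hφ : Per2 φ) (hmeas : Measurable φ)
    (x : Fin 2 → ℝ) {r : ℝ} (hr : r ∈ Ioc 0 (1 / 2)) :
    ⨍⁻ y in closedBall x r, ‖φ y‖ₑ ∂volume ≤
      ENNReal.ofReal (r ^ (1 / 2 - 1 : ℝ)) * (2 * H12 φ) := by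
  have hr₀ : 0 < r := hr.1
  have hpow : (r ^ (1 / 2 - 1 : ℝ)) ^ 2 = r⁻¹ := by
    rw [← Real.rpow_natCast, ← Real.rpow_mul hr₀.le, ← Real.rpow_neg_one]
    norm_num
  rw [← ENNReal.pow_le_pow_left_iff two_ne_zero]
  calc (⨍⁻ y in closedBall x r, ‖φ y‖ₑ ∂volume) ^ 2
      ≤ ENNReal.ofReal (2 / r) * H12 φ ^ 2 := hφ.sq_setLAverage_enorm_le hmeas x r hr
    _ ≤ ENNReal.ofReal (r⁻¹ * 4) * H12 φ ^ 2 := by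
      gcongr
      rw [div_eq_inv_mul]
      gcongr
      norm_num
    _ = _ := by
      rw [ENNReal.ofReal_mul (by positivity), mul_pow, mul_pow,
        ← ENNReal.ofReal_pow (by positivity), hpow, mul_assoc, ENNReal.ofReal_ofNat]
      norm_num

variable {f : (Fin 2 → ℝ) → ℝ}

theorem Per2.setLAverage_enorm_fderiv_le (hper : Per2 f) (hf : ContDiff ℝ 1 f) (x : Fin 2 → ℝ)
    {r : ℝ} (hr : r ∈ Ioc 0 (1 / 2)) :
    ⨍⁻ y in closedBall x r, ‖fderiv ℝ f y‖ₑ ∂volume ≤ ENNReal.ofReal (r ^ (1 / 2 - 1 : ℝ)) *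
      (2 * ∑ i, H12 fun y ↦ fderiv ℝ f y (Pi.single i 1)) := by
  have hDf : Continuous (fderiv ℝ f) := hf.continuous_fderiv one_ne_zero
  have hpartial (i : Fin 2) : Measurable fun y ↦ fderiv ℝ f y (Pi.single i 1) :=
    (hDf.clm_apply continuous_const).measurable
  calc ⨍⁻ y in closedBall x r, ‖fderiv ℝ f y‖ₑ ∂volume
      ≤ ⨍⁻ y in closedBall x r, ∑ i, ‖fderiv ℝ f y (Pi.single i 1)‖ₑ ∂volume :=
        laverage_mono fun y ↦ opENorm_le_sum_enorm_single (fderiv ℝ f y)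
    _ = ∑ i, ⨍⁻ y in closedBall x r, ‖fderiv ℝ f y (Pi.single i 1)‖ₑ ∂volume :=
        lintegral_finsetSum _ fun i _ ↦ (hpartial i).enorm
    _ ≤ ∑ i, ENNReal.ofReal (r ^ (1 / 2 - 1 : ℝ)) *
          (2 * H12 fun y ↦ fderiv ℝ f y (Pi.single i 1)) :=
        Finset.sum_le_sum fun i _ ↦ (hper.fderiv_apply _).setLAverage_enorm_le (hpartial i) x hr
    _ = _ := by simp only [Finset.mul_sum]

theorem Per2.setLAverage_enorm_sub_le_of_le_half (hper : Per2 f) (hf : ContDiff ℝ 1 f)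
    (x : Fin 2 → ℝ) {κ : ℝ} (hκ : κ ∈ Ioc 0 (1 / 2)) :
    ⨍⁻ z in closedBall x κ, ‖f x - f z‖ₑ ∂volume ≤
      ENNReal.ofReal (4 * √κ) * ∑ i, H12 fun y ↦ fderiv ℝ f y (Pi.single i 1) := by
  have morrey := setLAverage_closedBall_enorm_sub_le_rpow volume hf hκ.1 one_half_pos fun r hr ↦
    hper.setLAverage_enorm_fderiv_le hf x ⟨hr.1, hr.2.trans hκ.2⟩
  refine morrey.trans_eq ?_
  rw [← mul_assoc, ← Real.sqrt_eq_rpow, ← ENNReal.ofReal_ofNat 2,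
    ← ENNReal.ofReal_mul (by positivity)]
  congr 2
  ring

theorem Per2.enorm_sub_le_sum_H12 (hper : Per2 f) (hf : ContDiff ℝ 1 f) (x y : Fin 2 → ℝ) :
    ‖f x - f y‖ₑ ≤
      ENNReal.ofReal (8 * √(1 / 2)) * ∑ i, H12 fun y ↦ fderiv ℝ f y (Pi.single i 1) := by
  have hhalf : (1 / 2 : ℝ) ∈ Ioc 0 (1 / 2) := by norm_num
  have hcont : Continuous f := hf.continuous
  have hshift : Per2 fun z ↦ ‖f y - f z‖ₑ := fun z k ↦ by simp only [hper z k]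
  have := isFiniteMeasure_restrict_closedBall volume x (1 / 2)
  have := neZero_restrict_closedBall volume x one_half_pos
  calc ‖f x - f y‖ₑ = ⨍⁻ _ in closedBall x (1 / 2), ‖f x - f y‖ₑ ∂volume :=
        (laverage_const _ _).symm
    _ ≤ ⨍⁻ z in closedBall x (1 / 2), (‖f x - f z‖ₑ + ‖f y - f z‖ₑ) ∂volume :=
        laverage_mono fun z ↦ by
          rw [← sub_sub_sub_cancel_right (f x) (f y) (f z)]
          exact enorm_sub_le
    _ = (⨍⁻ z in closedBall x (1 / 2), ‖f x - f z‖ₑ ∂volume) +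
          ⨍⁻ z in closedBall x (1 / 2), ‖f y - f z‖ₑ ∂volume :=
        lintegral_add_left (by fun_prop) _
    _ = (⨍⁻ z in closedBall x (1 / 2), ‖f x - f z‖ₑ ∂volume) +
          ⨍⁻ z in closedBall y (1 / 2), ‖f y - f z‖ₑ ∂volume := by
        rw [hshift.setLAverage_closedBall_half_eq x y]
    _ ≤ _ := add_le_add (hper.setLAverage_enorm_sub_le_of_le_half hf x hhalf)
        (hper.setLAverage_enorm_sub_le_of_le_half hf y hhalf)
    _ = _ := by
        rw [← add_mul, ← ENNReal.ofReal_add (by positivity) (by positivity)]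
        congr 2
        ring

theorem Per2.setLAverage_enorm_sub_le (hper : Per2 f) (hf : ContDiff ℝ 1 f) (x : Fin 2 → ℝ)
    {κ : ℝ} (hκ : 0 < κ) :
    ⨍⁻ z in closedBall x κ, ‖f x - f z‖ₑ ∂volume ≤
      ENNReal.ofReal (8 * √κ) * ∑ i, H12 fun y ↦ fderiv ℝ f y (Pi.single i 1) := by
  rcases le_total κ (1 / 2) with hsmall | hlarge
  · refine (hper.setLAverage_enorm_sub_le_of_le_half hf x ⟨hκ, hsmall⟩).trans ?_
    gcongr
    norm_num
  · have := isFiniteMeasure_restrict_closedBall volume x κ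
    have := neZero_restrict_closedBall volume x hκ
    calc ⨍⁻ z in closedBall x κ, ‖f x - f z‖ₑ ∂volume
        ≤ ⨍⁻ _ in closedBall x κ, (ENNReal.ofReal (8 * √(1 / 2)) *
            ∑ i, H12 fun y ↦ fderiv ℝ f y (Pi.single i 1)) ∂volume :=
          laverage_mono fun z ↦ hper.enorm_sub_le_sum_H12 hf x z
      _ ≤ _ := by
          rw [laverage_const]
          gcongr

end HolderMean

section Mollifier

theorem exists_nnnorm_le_of_support_subset_closedBall {X E : Type*} [PseudoMetricSpace X]
    [ProperSpace X] [NormedAddCommGroup E] {g : X → E} (hg : Continuous g) {c : X} {R : ℝ}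
    (hsupp : Function.support g ⊆ closedBall c R) : ∃ M : ℝ≥0, 0 < M ∧ ∀ x, ‖g x‖₊ ≤ M := by
  have hcompact : HasCompactSupport g := .of_support_subset_isCompact (isCompact_closedBall c R)
    hsupp
  obtain ⟨M, hMpos, hM⟩ := (hcompact.isCompact_range hg).isBounded.exists_pos_norm_le
  exact ⟨⟨M, hMpos.le⟩, hMpos, fun x ↦ hM _ (mem_range_self x)⟩

variable {ζ : (Fin 2 → ℝ) → ℝ} {κ : ℝ}

/-- The kernel `z ↦ κ⁻² ζ((x - z)/κ)` of the mollification `Λ_κ` at the point `x`. -/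
def mollKernel (ζ : (Fin 2 → ℝ) → ℝ) (κ : ℝ) (x z : Fin 2 → ℝ) : ℝ :=
  (κ ^ 2)⁻¹ * ζ (κ⁻¹ • (x - z))

theorem support_mollKernel_subset (hζsupp : Function.support ζ ⊆ closedBall 0 1) (hκ : 0 < κ)
    (x : Fin 2 → ℝ) : Function.support (mollKernel ζ κ x) ⊆ closedBall x κ := fun z hz ↦ by
  have hmem : κ⁻¹ • (x - z) ∈ closedBall 0 1 := hζsupp (right_ne_zero_of_mul hz)
  rwa [mem_closedBall_zero_iff, norm_smul, norm_inv, Real.norm_of_nonneg hκ.le,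
    inv_mul_le_iff₀ hκ, mul_one, ← mem_closedBall_iff_norm'] at hmem

theorem integrable_mollKernel (hζ : Integrable ζ) (hκ : 0 < κ) (x : Fin 2 → ℝ) :
    Integrable (mollKernel ζ κ x) :=
  ((hζ.comp_smul (inv_ne_zero hκ.ne')).comp_sub_left x).const_mul _

theorem integral_mollKernel (hκ : 0 < κ) (x : Fin 2 → ℝ) :
    ∫ z, mollKernel ζ κ x z = ∫ z, ζ z := by
  simp only [mollKernel]
  rw [integral_const_mul, integral_sub_left_eq_self (fun u ↦ ζ (κ⁻¹ • u)) volume x,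
    Measure.integral_comp_inv_smul_of_nonneg _ _ hκ.le]
  simp [hκ.ne']

theorem sub_moll_eq_integral (hζsupp : Function.support ζ ⊆ closedBall 0 1)
    (hζint : ∫ z, ζ z = 1) (hκ : 0 < κ) {f : (Fin 2 → ℝ) → ℝ} (hf : Continuous f)
    (x : Fin 2 → ℝ) : f x - moll ζ κ f x = ∫ z, mollKernel ζ κ x z * (f x - f z) := by
  have hk := integrable_mollKernel (integrable_of_integral_eq_one hζint) hκ x
  have hkf : Integrable fun z ↦ mollKernel ζ κ x z * f z :=
    (integrableOn_iff_integrable_of_support_subset ((Function.support_mul_subset_left _ _).trans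
      (support_mollKernel_subset hζsupp hκ x))).1 <|
        hk.integrableOn.mul_continuousOn hf.continuousOn (isCompact_closedBall x κ)
  simp only [mul_sub]
  rw [integral_sub (hk.mul_const _) hkf, integral_mul_const, integral_mollKernel hκ, hζint,
    one_mul]
  rfl

theorem enorm_sub_moll_le (hζsupp : Function.support ζ ⊆ closedBall 0 1) (hζint : ∫ z, ζ z = 1)
    {M : ℝ≥0} (hζM : ∀ z, ‖ζ z‖₊ ≤ M) (hκ : 0 < κ) {f : (Fin 2 → ℝ) → ℝ} (hf : Continuous f)
    (x : Fin 2 → ℝ) :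
    ‖f x - moll ζ κ f x‖ₑ ≤ 4 * M * ⨍⁻ z in closedBall x κ, ‖f x - f z‖ₑ ∂volume := by
  have hkernel (z : Fin 2 → ℝ) : ‖mollKernel ζ κ x z‖ₑ ≤ ENNReal.ofReal (κ ^ 2)⁻¹ * M := by
    rw [mollKernel, enorm_mul, Real.enorm_of_nonneg (by positivity)]
    gcongr
    exact ENNReal.coe_le_coe.2 (hζM _)
  have hsupp : Function.support (fun z ↦ ‖mollKernel ζ κ x z * (f x - f z)‖ₑ) ⊆ closedBall x κ :=
    fun z hz ↦ support_mollKernel_subset hζsupp hκ x fun hzero ↦ hz (by simp [hzero])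
  calc ‖f x - moll ζ κ f x‖ₑ
      ≤ ∫⁻ z, ‖mollKernel ζ κ x z * (f x - f z)‖ₑ := by
        rw [sub_moll_eq_integral hζsupp hζint hκ hf]
        exact enorm_integral_le_lintegral_enorm _
    _ = ∫⁻ z in closedBall x κ, ‖mollKernel ζ κ x z * (f x - f z)‖ₑ :=
        (setLIntegral_eq_of_support_subset hsupp).symm
    _ ≤ ∫⁻ z in closedBall x κ, ENNReal.ofReal (κ ^ 2)⁻¹ * M * ‖f x - f z‖ₑ := by
        gcongr with z
        rw [enorm_mul]
        gcongr
        exact hkernel z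
    _ = 4 * M * ⨍⁻ z in closedBall x κ, ‖f x - f z‖ₑ ∂volume := by
        have hscale : ENNReal.ofReal (κ ^ 2)⁻¹ = 4 * ENNReal.ofReal ((2 * κ) ^ 2)⁻¹ := by
          rw [← ENNReal.ofReal_ofNat 4, ← ENNReal.ofReal_mul (by norm_num)]
          congr 1
          ring
        rw [setLAverage_pi_closedBall x hκ, Fintype.card_fin, lintegral_const_mul' _ _
          (ENNReal.mul_ne_top ENNReal.ofReal_ne_top ENNReal.coe_ne_top), hscale]
        ring

end Mollifier

theorem mollifier_approximation_rate_general {ζ : (Fin 2 → ℝ) → ℝ}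
    (hζsupp : Function.support ζ ⊆ closedBall 0 1) (hζint : ∫ x, ζ x = 1) {M : ℝ≥0}
    (hζM : ∀ x, ‖ζ x‖₊ ≤ M) {κ : ℝ} (hκ : 0 < κ) {f : (Fin 2 → ℝ) → ℝ} (hf : ContDiff ℝ 1 f)
    (hper : Per2 f) (x : Fin 2 → ℝ) :
    ENNReal.ofReal |f x - moll ζ κ f x| ≤ (32 * M : ℝ≥0) * ENNReal.ofReal √κ *
      ∑ i, H12 fun y ↦ fderiv ℝ f y (Pi.single i 1) :=
  calc ENNReal.ofReal |f x - moll ζ κ f x|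
      = ‖f x - moll ζ κ f x‖ₑ := (Real.enorm_eq_ofReal_abs _).symm
    _ ≤ 4 * M * ⨍⁻ z in closedBall x κ, ‖f x - f z‖ₑ ∂volume :=
        enorm_sub_moll_le hζsupp hζint hζM hκ hf.continuous x
    _ ≤ 4 * M * (ENNReal.ofReal (8 * √κ) *
          ∑ i, H12 fun y ↦ fderiv ℝ f y (Pi.single i 1)) := by
        gcongr
        exact hper.setLAverage_enorm_sub_le hf x hκ
    _ = _ := by
        rw [ENNReal.ofReal_mul (by norm_num), ENNReal.ofReal_ofNat, ENNReal.coe_mul]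
        push_cast
        ring

/-- **Mollifier approximation rate in `L^∞`.**  For a standard mollifier kernel `ζ` and
the associated mollification `Λ_κ` at scale `κ`, any (smooth periodic) `f` on `𝕋²`
satisfies `|f − Λ_κ f|_{L^∞(𝕋²)} ≲ √κ · |∂̄f|_{H^{1/2}(𝕋²)}`, with constant independent
of `κ`. -/
theorem mollifier_approximation_rate
    (ζ : (Fin 2 → ℝ) → ℝ) (hζ : ContDiff ℝ (⊤ : ℕ∞) ζ)
    (hζsupp : Function.support ζ ⊆ Metric.closedBall 0 1)
    (hζnonneg : ∀ x, 0 ≤ ζ x) (hζint : ∫ x, ζ x = 1) :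
    ∃ C : ℝ≥0, 0 < C ∧
      ∀ κ : ℝ, 0 < κ →
        ∀ f : (Fin 2 → ℝ) → ℝ, ContDiff ℝ (⊤ : ℕ∞) f → Per2 f →
          ∀ x : Fin 2 → ℝ,
            ENNReal.ofReal |f x - moll ζ κ f x| ≤
              C * ENNReal.ofReal (Real.sqrt κ) *
                ∑ i : Fin 2, H12 fun y => fderiv ℝ f y (Pi.single i 1) := by
  obtain ⟨M, hMpos, hM⟩ := exists_nnnorm_le_of_support_subset_closedBall hζ.continuous hζsupp
  exact ⟨32 * M, by positivity, fun κ hκ f hf hper x ↦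
    mollifier_approximation_rate_general hζsupp hζint hM hκ (hf.of_le (mod_cast le_top)) hper x⟩
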